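/- Let α > 0 satisfy α·ζ(1+α) ≤ 2. Then 2/α is the best constant in the Hilbert-type inequality for B_α: for all square-summable sequences a = (a_n)_{n≥1}, b = (b_n)_{n≥1} of nonnegative reals one has ∑_{m=1}^∞ ∑_{n=1}^∞ a_m b_n (mn)^{α−1/2} / max(m,n)^{2α} ≤ (2/α) · ‖a‖_{ℓ²} ‖b‖_{ℓ²}, and for every C < 2/α there exist nonzero square-summable nonnegative sequences a, b for which the double sum exceeds C · ‖a‖_{ℓ²} ‖b‖_{ℓ²}. -/

import Mathlib

open Finset

lemma hilb_poly (h : ℝ) (h0 : 0 ≤ h) (h1 : h ≤ 1/2) :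
    (1+5/3*h+5/9*h^2-h^3/10)^3 ≤ (1+h)^5 ∧ (1-h)^5 ≤ (1-5/3*h+5/9*h^2+h^3/10)^3 ∧
    (5/3*h/2)*(1+(1-5/3*h+5/9*h^2+h^3/10))*(1+(1+5/3*h+5/9*h^2-h^3/10)) ≤
      (1+5/3*h+5/9*h^2-h^3/10) - (1-5/3*h+5/9*h^2+h^3/10) := by
  have : 0 ≤ 1/2 - h := by linarith
  refine ⟨?_, ?_, ?_⟩ <;>
  nlinarith [pow_nonneg h0 3, pow_nonneg h0 4, pow_nonneg h0 5, pow_nonneg h0 6, pow_nonneg h0 7,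
    pow_nonneg h0 8, pow_nonneg h0 9, mul_nonneg this (pow_nonneg h0 8),
    mul_nonneg this (pow_nonneg h0 7), mul_nonneg this (pow_nonneg h0 6),
    mul_nonneg this (pow_nonneg h0 5), mul_nonneg this (pow_nonneg h0 4),
    mul_nonneg this (pow_nonneg h0 3)]

lemma hilb_pow53 (x : ℝ) (hx : 0 ≤ x) : (x ^ (5/3:ℝ))^3 = x^5 := by
  rw [← Real.rpow_natCast, ← Real.rpow_mul hx, ← Real.rpow_natCast]
  norm_num

/-- the case `α = 5/3` -/
lemma hilb_base (h : ℝ) (h0 : 0 ≤ h) (h1 : h ≤ 1/2) :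
    (5/3*h/2)*(1+(1-h)^(5/3:ℝ))*(1+(1+h)^(5/3:ℝ)) ≤ (1+h)^(5/3:ℝ) - (1-h)^(5/3:ℝ) := by
  obtain ⟨p1, p2, p3⟩ := hilb_poly h h0 h1
  have hA0 : 0 ≤ (1+h)^(5/3:ℝ) := by positivity
  have hB0 : 0 ≤ (1-h)^(5/3:ℝ) := Real.rpow_nonneg (by linarith) _
  have hB1 : (1-h)^(5/3:ℝ) ≤ 1 := Real.rpow_le_one (by linarith) (by linarith) (by norm_num)
  rw [← hilb_pow53 _ (by linarith)] at p1 p2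
  have hA := le_of_pow_le_pow_left₀ (by norm_num) hA0 p1
  have hB := le_of_pow_le_pow_left₀ (by norm_num) (by
    nlinarith [pow_nonneg h0 3, pow_nonneg h0 2]) p2
  have hP : 0 ≤ 1 + (1+5/3*h+5/9*h^2-h^3/10) := by
    nlinarith [mul_nonneg h0 (sq_nonneg h), mul_nonneg (sq_nonneg h) (sub_nonneg.2 h1)]
  generalize (1+h)^(5/3:ℝ) = A at *
  generalize (1-h)^(5/3:ℝ) = B at *
  generalize (1+5/3*h+5/9*h^2-h^3/10) = P at *
  generalize (1-5/3*h+5/9*h^2+h^3/10) = Q at *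
  have e1 : (5/3*h/2)*(1+B)*(A-P) ≤ A - P := by
    have : (5/3*h/2)*(1+B) ≤ 1 := by nlinarith
    nlinarith
  have e2 : (5/3*h/2)*(1+B)*(1+P) ≤ (5/3*h/2)*(1+Q)*(1+P) := by gcongr
  nlinarith

lemma hilb_sig_concave : ConcaveOn ℝ (Set.Ici (0:ℝ)) Real.sigmoid := by
  apply AntitoneOn.concaveOn_of_deriv (convex_Ici 0) _root_.continuous_sigmoid.continuousOn
    _root_.differentiable_sigmoid.differentiableOn
  rw [Real.deriv_sigmoid]
  intro x hx y hy hxy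
  simp at hx hy
  have h1 := Real.sigmoid_le hxy
  have h2 := Real.sigmoid_le hx.le
  rw [Real.sigmoid_zero] at h2
  norm_num at h2
  simp only
  nlinarith

lemma hilb_sig_scale (c x : ℝ) (hc : 0 ≤ c) (hc1 : c ≤ 1) (hx : 0 ≤ x) :
    c * (Real.sigmoid x - 1/2) ≤ Real.sigmoid (c*x) - 1/2 := by
  have := hilb_sig_concave.2 (show x ∈ Set.Ici (0:ℝ) from hx) (show (0:ℝ) ∈ Set.Ici (0:ℝ) by simp) hc
    (show 0 ≤ 1 - c by linarith) (by ring)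
  simp [Real.sigmoid_zero] at this
  linarith

lemma hilb_sig_rpow (x α : ℝ) (hx : 0 < x) : (1 + x ^ α)⁻¹ = Real.sigmoid (-(α * Real.log x)) := by
  rw [Real.sigmoid_def, Real.rpow_def_of_pos hx]; congr 3; ring

lemma hilb_main (α h : ℝ) (hα : 0 ≤ α) (hα1 : α ≤ 5/3) (h0 : 0 ≤ h) (h1 : h ≤ 1/2) :
    α*h/2 ≤ (1+(1-h)^α)⁻¹ - (1+(1+h)^α)⁻¹ := by
  have hb : 5/3*h/2 ≤ (1+(1-h)^(5/3:ℝ))⁻¹ - (1+(1+h)^(5/3:ℝ))⁻¹ := by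
    have := hilb_base h h0 h1
    have hA0 : 0 ≤ (1+h)^(5/3:ℝ) := by positivity
    have hB0 : 0 ≤ (1-h)^(5/3:ℝ) := Real.rpow_nonneg (by linarith) _
    rw [inv_sub_inv (by positivity) (by positivity), le_div_iff₀ (by positivity)]
    linarith
  rw [hilb_sig_rpow _ _ (by linarith), hilb_sig_rpow _ _ (by linarith)] at hb ⊢
  rw [Real.sigmoid_neg (_ * Real.log (1+h))] at hb ⊢
  have l1 : 0 ≤ Real.log (1+h) := Real.log_nonneg (by linarith)
  have l2 : Real.log (1-h) ≤ 0 := Real.log_nonpos (by linarith) (by linarith)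
  have k1 := hilb_sig_scale (α/(5/3)) (5/3*Real.log (1+h)) (by positivity)
    (by rw [div_le_one (by norm_num)]; exact hα1) (by positivity)
  have k2 := hilb_sig_scale (α/(5/3)) (-(5/3*Real.log (1-h))) (by positivity)
    (by rw [div_le_one (by norm_num)]; exact hα1) (by linarith)
  have r1 : α/(5/3) * (5/3*Real.log (1+h)) = α*Real.log (1+h) := by ring
  have r2 : α/(5/3) * (-(5/3*Real.log (1-h))) = -(α*Real.log (1-h)) := by ring
  rw [r1] at k1
  rw [r2] at k2
  have := mul_le_mul_of_nonneg_left hb (show 0 ≤ α/(5/3) by positivity)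
  linarith

/-- upper bound for the tail -/
noncomputable def hilbU (α x : ℝ) : ℝ := 2/α / (x^α + (x+1)^α)

lemma hilb_tele (α x : ℝ) (hα : 0 < α) (hα1 : α ≤ 5/3) (hx : 1 ≤ x) :
    (x+1)^(-(1+α)) ≤ hilbU α x - hilbU α (x+1) := by
  have hM : 0 < x + 1 := by linarith
  have h := hilb_main α (1/(x+1)) hα.le hα1 (by positivity)
    (by apply one_div_le_one_div_of_le <;> linarith)
  have e1 : 1 - 1/(x+1) = x/(x+1) := by field_simp; ring
  have e2 : 1 + 1/(x+1) = (x+1+1)/(x+1) := by field_simp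
  rw [e1, e2, Real.div_rpow (by linarith) hM.le, Real.div_rpow (by linarith) hM.le] at h
  unfold hilbU
  have hp : (x+1)^(-(1+α)) = 1/((x+1)*(x+1)^α) := by
    rw [Real.rpow_neg hM.le, Real.rpow_add hM, Real.rpow_one, one_div]
  rw [hp]
  have hA : 0 < (x+1)^α := by positivity
  have hB : 0 < x^α := by positivity
  have hC : 0 < (x+1+1)^α := by positivity
  generalize (x+1)^α = A at *
  generalize x^α = B at *
  generalize (x+1+1)^α = C at *
  have f1 : (1+B/A)⁻¹ = A/(B+A) := by field_simp; ring
  have f2 : (1+C/A)⁻¹ = A/(A+C) := by field_simp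
  rw [f1, f2] at h
  have := mul_le_mul_of_nonneg_left h (show 0 ≤ 2/α/A by positivity)
  calc 1/((x+1)*A) = 2/α/A * (α * (1/(x+1))/2) := by field_simp
    _ ≤ _ := this
    _ = _ := by field_simp

/-- tails of zeta(1+α) -/
noncomputable def hilbT (α : ℝ) (m : ℕ) : ℝ := ∑' k : ℕ, (((k + m : ℕ):ℝ)+1)^(-(1+α))

lemma hilb_summable (α : ℝ) (hα : 0 < α) (m : ℕ) :
    Summable fun k : ℕ => (((k + m : ℕ):ℝ)+1)^(-(1+α)) := by
  have h := (Real.summable_nat_rpow (p := -(1+α))).2 (by linarith)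
  have := (summable_nat_add_iff (m+1)).2 h
  refine this.congr fun k => ?_
  push_cast
  ring_nf

lemma hilbT_succ (α : ℝ) (hα : 0 < α) (m : ℕ) :
    hilbT α m = ((m:ℝ)+1)^(-(1+α)) + hilbT α (m+1) := by
  unfold hilbT
  rw [(hilb_summable α hα m).tsum_eq_zero_add]
  congr 1
  · simp
  · refine tsum_congr fun k => ?_
    push_cast; ring_nf

lemma hilbU_pos (α x : ℝ) (hα : 0 < α) (hx : 0 ≤ x) : 0 ≤ hilbU α x := by
  unfold hilbU; positivity

lemma hilbT_le (α : ℝ) (hα : 0 < α) (hα1 : α ≤ 5/3) (m : ℕ) (hm : 1 ≤ m) :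
    hilbT α m ≤ hilbU α m := by
  apply Real.tsum_le_of_sum_range_le
  · intro n; positivity
  intro n
  have : ∀ n : ℕ, ∑ i ∈ range n, (((i + m : ℕ):ℝ)+1)^(-(1+α)) ≤ hilbU α m - hilbU α ((n+m:ℕ):ℝ) := by
    intro n
    induction n with
    | zero => simp
    | succ n ih =>
      rw [sum_range_succ]
      have hm' : (1:ℝ) ≤ ((n+m:ℕ):ℝ) := by exact_mod_cast (by omega)
      have := hilb_tele α ((n+m:ℕ):ℝ) hα hα1 hm'
      have e : ((n+1+m:ℕ):ℝ) = ((n+m:ℕ):ℝ)+1 := by push_cast; ring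
      rw [e]
      linarith
  have h2 := hilbU_pos α ((n+m:ℕ):ℝ) hα (by positivity)
  linarith [this n]

lemma hilb_row (α : ℝ) (hα : 0 < α) (hα1 : α ≤ 5/3) (hz : α * hilbT α 0 ≤ 2) (m : ℕ) (hm : 1 ≤ m) :
    (∑ j ∈ range m, ((j:ℝ)+1)^(α-1)) + (m:ℝ)^(2*α) * hilbT α m ≤ 2/α * (m:ℝ)^α := by
  induction m, hm using Nat.le_induction with
  | base =>
    have := hilbT_succ α hα 0
    simp at this ⊢
    rw [← this, le_div_iff₀ hα]
    linarith
  | succ m hm ih =>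
    have h1 := hilbT_le α hα hα1 m hm
    have h2 := hilbT_succ α hα m
    rw [sum_range_succ]
    have hm0 : (0:ℝ) < m := by exact_mod_cast hm
    push_cast
    have e1 : ((m:ℝ)+1)^(2*α) = ((m:ℝ)+1)^α * ((m:ℝ)+1)^α := by
      rw [← Real.rpow_add (by positivity)]; ring_nf
    have e2 : (m:ℝ)^(2*α) = (m:ℝ)^α * (m:ℝ)^α := by
      rw [← Real.rpow_add (by positivity)]; ring_nf
    have e3 : ((m:ℝ)+1)^(2*α) * ((m:ℝ)+1)^(-(1+α)) = ((m:ℝ)+1)^(α-1) := by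
      rw [← Real.rpow_add (by positivity)]; ring_nf
    have e4 : hilbT α (m+1) = hilbT α m - ((m:ℝ)+1)^(-(1+α)) := by linarith
    rw [e4, mul_sub, e3]
    have hle : (m:ℝ)^α ≤ ((m:ℝ)+1)^α := Real.rpow_le_rpow hm0.le (by linarith) hα.le
    have hp : 0 < (m:ℝ)^α := by positivity
    unfold hilbU at h1
    rw [le_div_iff₀ (by positivity)] at h1
    rw [e2] at ih
    rw [e1]
    generalize (m:ℝ)^α = B at *
    generalize ((m:ℝ)+1)^α = A at *
    have := mul_le_mul_of_nonneg_left h1 (show 0 ≤ A - B by linarith)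
    nlinarith

lemma hilb_alpha_le (α : ℝ) (hα : 0 < α) (hz : α * hilbT α 0 ≤ 2) : α ≤ 5/3 := by
  by_contra hcon
  push Not at hcon
  have hsum : ∀ n, ∑ i ∈ range n, ((i:ℝ)+1)^(-(1+α)) ≤ hilbT α 0 := fun n => by
    have := (hilb_summable α hα 0).sum_le_tsum (range n) (fun i _ => by positivity)
    simpa [hilbT] using this
  rcases le_or_gt 2 α with h2 | h2
  · have := hsum 2
    simp [sum_range_succ] at this
    have hp : (0:ℝ) < (1+1)^(-α+-1) := by positivity
    nlinarith
  · have h20 : ∑ i ∈ range 25, ((i:ℝ)+1)^(-3:ℝ) ≤ ∑ i ∈ range 25, ((i:ℝ)+1)^(-(1+α)) := by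
      apply sum_le_sum
      intro i _
      apply Real.rpow_le_rpow_of_exponent_le
      · have : (0:ℝ) ≤ i := by positivity
        linarith
      · linarith
    have h3 : (6/5:ℝ) < ∑ i ∈ range 25, ((i:ℝ)+1)^(-3:ℝ) := by
      have : ∀ i : ℕ, ((i:ℝ)+1)^(-3:ℝ) = 1/((i:ℝ)+1)^3 := fun i => by
        rw [Real.rpow_neg (by positivity), one_div]; norm_cast
      simp only [this]
      norm_num [sum_range_succ]
    have h5 := (h3.trans_le h20).trans_le (hsum 25)
    nlinarith

noncomputable def hilbK (α : ℝ) (i j : ℕ) : ℝ :=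
  (((i:ℝ)+1) * ((j:ℝ)+1)) ^ (α - 1/2) / (max ((i:ℝ)+1) ((j:ℝ)+1)) ^ (2*α)

noncomputable def hilbW (α : ℝ) (i j : ℕ) : ℝ :=
  ((i:ℝ)+1)^α * ((j:ℝ)+1)^(α-1) / (max ((i:ℝ)+1) ((j:ℝ)+1)) ^ (2*α)

lemma hilbK_nonneg (α : ℝ) (i j : ℕ) : 0 ≤ hilbK α i j := by unfold hilbK; positivity
lemma hilbW_nonneg (α : ℝ) (i j : ℕ) : 0 ≤ hilbW α i j := by unfold hilbW; positivity

lemma hilbK_symm (α : ℝ) (i j : ℕ) : hilbK α i j = hilbK α j i := by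
  unfold hilbK; rw [mul_comm, max_comm]

lemma hilbW_eq (α : ℝ) (i j : ℕ) :
    hilbW α i j = hilbK α i j * (((i:ℝ)+1)^(1/2:ℝ) / ((j:ℝ)+1)^(1/2:ℝ)) := by
  unfold hilbW hilbK
  have hx : (0:ℝ) < (i:ℝ)+1 := by positivity
  have hy : (0:ℝ) < (j:ℝ)+1 := by positivity
  rw [Real.mul_rpow hx.le hy.le]
  have e1 : ((i:ℝ)+1)^α = ((i:ℝ)+1)^(α-1/2) * ((i:ℝ)+1)^(1/2:ℝ) := by
    rw [← Real.rpow_add hx]; ring_nf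
  have e2 : ((j:ℝ)+1)^(α-1) = ((j:ℝ)+1)^(α-1/2) / ((j:ℝ)+1)^(1/2:ℝ) := by
    rw [← Real.rpow_sub hy]; ring_nf
  rw [e1, e2]
  ring

lemma hilb_amgm (α t p q : ℝ) (ht : 0 < t) (i j : ℕ) :
    p * q * hilbK α i j ≤ t/2 * (p^2 * hilbW α i j) + t⁻¹/2 * (q^2 * hilbW α j i) := by
  rw [hilbW_eq, hilbW_eq, hilbK_symm α j i]
  have hx : (0:ℝ) < ((i:ℝ)+1)^(1/2:ℝ) := by positivity
  have hy : (0:ℝ) < ((j:ℝ)+1)^(1/2:ℝ) := by positivity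
  have hK := hilbK_nonneg α i j
  generalize ((i:ℝ)+1)^(1/2:ℝ) = x at *
  generalize ((j:ℝ)+1)^(1/2:ℝ) = y at *
  have key : p * q ≤ t/2 * (p^2 * (x/y)) + t⁻¹/2 * (q^2 * (y/x)) := by
    have : t/2 * (p^2 * (x/y)) + t⁻¹/2 * (q^2 * (y/x)) - p*q = (t*x*p - y*q)^2 / (2*t*x*y) := by
      field_simp; ring
    have h2 : 0 ≤ (t*x*p - y*q)^2 / (2*t*x*y) := by positivity
    linarith
  have := mul_le_mul_of_nonneg_right key hK
  linarith

lemma hilbW_low (α : ℝ) (i j : ℕ) (hij : j < i+1) :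
    hilbW α i j = ((i:ℝ)+1)^(-α) * ((j:ℝ)+1)^(α-1) := by
  unfold hilbW
  have hx : (0:ℝ) < (i:ℝ)+1 := by positivity
  have : (j:ℝ) ≤ i := by exact_mod_cast (by omega)
  rw [max_eq_left (by linarith)]
  have e1 : ((i:ℝ)+1)^(-α) = ((i:ℝ)+1)^α / ((i:ℝ)+1)^(2*α) := by
    rw [← Real.rpow_sub hx]; ring_nf
  rw [e1]; ring

lemma hilbW_high (α : ℝ) (i k : ℕ) :
    hilbW α i (k+(i+1)) = ((i:ℝ)+1)^α * ((((k+(i+1):ℕ):ℝ))+1)^(-(1+α)) := by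
  unfold hilbW
  have hx : (0:ℝ) < ((k+(i+1):ℕ):ℝ)+1 := by positivity
  have : (i:ℝ) ≤ ((k+(i+1):ℕ):ℝ) := by exact_mod_cast (by omega)
  rw [max_eq_right (by linarith), mul_div_assoc, ← Real.rpow_sub hx]
  ring_nf

lemma hilbW_summable (α : ℝ) (hα : 0 < α) (i : ℕ) : Summable (hilbW α i) := by
  rw [← summable_nat_add_iff (i+1)]
  simp only [hilbW_high]
  exact (hilb_summable α hα (i+1)).mul_left _

lemma hilbW_tsum_le (α : ℝ) (hα : 0 < α) (hz : α * hilbT α 0 ≤ 2) (i : ℕ) :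
    ∑' j, hilbW α i j ≤ 2/α := by
  rw [← (hilbW_summable α hα i).sum_add_tsum_nat_add (i+1)]
  simp only [hilbW_high]
  rw [tsum_mul_left, sum_congr rfl (fun j hj => hilbW_low α i j (mem_range.1 hj)), ← mul_sum]
  have h := hilb_row α hα (hilb_alpha_le α hα hz) hz (i+1) (by omega)
  push_cast at h
  have hx : (0:ℝ) < (i:ℝ)+1 := by positivity
  have := mul_le_mul_of_nonneg_left h (show 0 ≤ ((i:ℝ)+1)^(-α) by positivity)
  have e1 : ((i:ℝ)+1)^(-α) * ((i:ℝ)+1)^(2*α) = ((i:ℝ)+1)^α := by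
    rw [← Real.rpow_add hx]; ring_nf
  have e2 : ((i:ℝ)+1)^(-α) * ((i:ℝ)+1)^α = 1 := by
    rw [← Real.rpow_add hx]; simp
  change _ + ((i:ℝ)+1)^α * hilbT α (i+1) ≤ _
  rw [mul_add, ← mul_assoc, e1] at this
  refine this.trans (le_of_eq ?_)
  rw [mul_left_comm, e2, mul_one]

lemma hilb_sumW (α : ℝ) (hα : 0 < α) (hz : α * hilbT α 0 ≤ 2) (a : ℕ → ℝ)
    (ha : Summable fun n => a n ^ 2) :
    Summable (fun p : ℕ × ℕ => a p.1 ^2 * hilbW α p.1 p.2) ∧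
    ∑' p : ℕ × ℕ, a p.1 ^2 * hilbW α p.1 p.2 ≤ 2/α * ∑' n, a n ^ 2 := by
  have hb : ∀ i, ∑' j, a i ^2 * hilbW α i j ≤ 2/α * a i ^2 := fun i => by
    rw [tsum_mul_left, mul_comm]
    exact mul_le_mul_of_nonneg_right (hilbW_tsum_le α hα hz i) (sq_nonneg _)
  have hn : ∀ i, 0 ≤ ∑' j, a i ^2 * hilbW α i j := fun i =>
    tsum_nonneg fun j => mul_nonneg (sq_nonneg _) (hilbW_nonneg _ _ _)
  have hs2 : Summable fun i => ∑' j, a i ^2 * hilbW α i j :=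
    Summable.of_nonneg_of_le hn hb (ha.mul_left _)
  have hs : Summable (fun p : ℕ × ℕ => a p.1 ^2 * hilbW α p.1 p.2) := by
    rw [summable_prod_of_nonneg (fun p => mul_nonneg (sq_nonneg _) (hilbW_nonneg _ _ _))]
    refine ⟨fun i => ?_, hs2⟩
    have h := (hilbW_summable α hα i).mul_left (a i ^ 2)
    exact h
  refine ⟨hs, ?_⟩
  rw [hs.tsum_prod, ← tsum_mul_left]
  exact hs2.tsum_le_tsum hb (ha.mul_left _)

lemma hilb_upper (α : ℝ) (hα : 0 < α) (hz : α * hilbT α 0 ≤ 2) (a b : ℕ → ℝ)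
    (ha0 : ∀ n, 0 ≤ a n) (hb0 : ∀ n, 0 ≤ b n)
    (ha : Summable fun n => a n ^ 2) (hb : Summable fun n => b n ^ 2) :
    ∑' (i : ℕ) (j : ℕ), a i * b j * hilbK α i j ≤
      2/α * (Real.sqrt (∑' n, a n ^ 2) * Real.sqrt (∑' n, b n ^ 2)) := by
  obtain ⟨sa, ta⟩ := hilb_sumW α hα hz a ha
  obtain ⟨sb, tb⟩ := hilb_sumW α hα hz b hb
  have sb' := (Equiv.prodComm ℕ ℕ).summable_iff.2 sb
  have tb' := (Equiv.prodComm ℕ ℕ).tsum_eq (fun p : ℕ × ℕ => b p.1 ^2 * hilbW α p.1 p.2)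
  simp only [Function.comp_def, Equiv.prodComm_apply, Prod.fst_swap, Prod.snd_swap] at sb' tb'
  have key : ∀ t : ℝ, 0 < t → ∑' (i : ℕ) (j : ℕ), a i * b j * hilbK α i j ≤
      t/2 * (2/α * ∑' n, a n ^ 2) + t⁻¹/2 * (2/α * ∑' n, b n ^ 2) := by
    intro t ht
    have hsum := (sa.mul_left (t/2)).add (sb'.mul_left (t⁻¹/2))
    have hle : ∀ p : ℕ × ℕ, a p.1 * b p.2 * hilbK α p.1 p.2 ≤ _ := fun p =>
      hilb_amgm α t (a p.1) (b p.2) ht p.1 p.2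
    have hs : Summable fun p : ℕ × ℕ => a p.1 * b p.2 * hilbK α p.1 p.2 :=
      Summable.of_nonneg_of_le
        (fun p => mul_nonneg (mul_nonneg (ha0 _) (hb0 _)) (hilbK_nonneg _ _ _)) hle hsum
    have h1 := hs.tsum_le_tsum hle hsum
    rw [hs.tsum_prod, (sa.mul_left (t/2)).tsum_add (sb'.mul_left (t⁻¹/2)), tsum_mul_left,
      tsum_mul_left, tb'] at h1
    refine h1.trans ?_
    gcongr
  have hA0 : 0 ≤ ∑' n, a n ^ 2 := tsum_nonneg fun n => sq_nonneg _
  have hB0 : 0 ≤ ∑' n, b n ^ 2 := tsum_nonneg fun n => sq_nonneg _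
  rcases hA0.eq_or_lt with hA | hA
  · have hz : ∀ n, a n = 0 := by
      have := (hasSum_zero_iff_of_nonneg (fun n => sq_nonneg (a n))).1 (hA ▸ ha.hasSum)
      intro n
      simpa using congrFun this n
    simp [hz]
  rcases hB0.eq_or_lt with hB | hB
  · have hz : ∀ n, b n = 0 := by
      have := (hasSum_zero_iff_of_nonneg (fun n => sq_nonneg (b n))).1 (hB ▸ hb.hasSum)
      intro n
      simpa using congrFun this n
    simp [hz]
  have hsA := Real.sqrt_pos.2 hA
  have hsB := Real.sqrt_pos.2 hB
  have h := key (Real.sqrt (∑' n, b n ^ 2) / Real.sqrt (∑' n, a n ^ 2)) (by positivity)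
  refine h.trans (le_of_eq ?_)
  conv_lhs => rw [← Real.sq_sqrt hA0, ← Real.sq_sqrt hB0]
  rw [Real.sqrt_sq hsA.le, Real.sqrt_sq hsB.le]
  field_simp
  ring

/-! lower bound -/

lemma hilb_S_lower (α : ℝ) (hα : 0 < α) (m : ℕ) :
    ((m:ℝ)^α - 1)/α ≤ ∑ j ∈ range m, ((j:ℝ)+1)^(α-1) := by
  rcases le_total 1 α with h1 | h1
  · have : ∀ m : ℕ, (m:ℝ)^α/α ≤ ∑ j ∈ range m, ((j:ℝ)+1)^(α-1) := by
      intro m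
      induction m with
      | zero => simp [Real.zero_rpow hα.ne']
      | succ m ih =>
        rw [sum_range_succ]
        have hu : (0:ℝ) < (m:ℝ)+1 := by positivity
        have hb := one_add_mul_self_le_rpow_one_add (s := -(1/((m:ℝ)+1)))
          (by rw [neg_le_neg_iff, div_le_one hu]; have : (0:ℝ) ≤ m := by positivity
              linarith) h1
        have e : 1 + -(1/((m:ℝ)+1)) = m/((m:ℝ)+1) := by field_simp; ring
        rw [e, Real.div_rpow (by positivity) hu.le, le_div_iff₀ (by positivity)] at hb
        rw [Real.rpow_sub_one hu.ne']
        push_cast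
        rw [div_le_iff₀ hα] at ih ⊢
        have : (((m:ℝ)+1)^α/((m:ℝ)+1)) = (1/((m:ℝ)+1)) * ((m:ℝ)+1)^α := by ring
        rw [this]
        nlinarith
    refine le_trans ?_ (this m)
    gcongr
    linarith
  · have : ∀ m : ℕ, (((m:ℝ)+1)^α-1)/α ≤ ∑ j ∈ range m, ((j:ℝ)+1)^(α-1) := by
      intro m
      induction m with
      | zero => simp
      | succ m ih =>
        rw [sum_range_succ]
        have hu : (0:ℝ) < (m:ℝ)+1 := by positivity
        have hb := rpow_one_add_le_one_add_mul_self (s := (1/((m:ℝ)+1)))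
          (le_trans (by norm_num) (by positivity : (0:ℝ) ≤ 1/((m:ℝ)+1))) hα.le h1
        have e : 1 + (1/((m:ℝ)+1)) = ((m:ℝ)+1+1)/((m:ℝ)+1) := by field_simp
        rw [e, Real.div_rpow (by positivity) hu.le, div_le_iff₀ (by positivity)] at hb
        rw [Real.rpow_sub_one hu.ne']
        push_cast
        rw [div_le_iff₀ hα] at ih ⊢
        have : (((m:ℝ)+1)^α/((m:ℝ)+1)) = (1/((m:ℝ)+1)) * ((m:ℝ)+1)^α := by ring
        rw [this]
        nlinarith
    refine le_trans ?_ (this m)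
    gcongr
    linarith

lemma hilb_E_lower (α : ℝ) (hα : 0 < α) (N : ℕ) :
    ∑ k ∈ range N, (2/α * (1/((k:ℝ)+1)) - 2/α * ((k:ℝ)+1)^(-(1+α)) - ((k:ℝ)+1)^(-(1+1):ℝ)) ≤
    ∑ i ∈ range N, ∑ j ∈ range N,
      ((i:ℝ)+1)^(-(1/2):ℝ) * ((j:ℝ)+1)^(-(1/2):ℝ) * hilbK α i j := by
  have hsymm : ∀ i j : ℕ, ((i:ℝ)+1)^(-(1/2):ℝ) * ((j:ℝ)+1)^(-(1/2):ℝ) * hilbK α i j =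
      ((j:ℝ)+1)^(-(1/2):ℝ) * ((i:ℝ)+1)^(-(1/2):ℝ) * hilbK α j i := fun i j => by
    rw [hilbK_symm]; ring
  have hval : ∀ i j : ℕ, j ≤ i → ((i:ℝ)+1)^(-(1/2):ℝ) * ((j:ℝ)+1)^(-(1/2):ℝ) * hilbK α i j =
      ((i:ℝ)+1)^(-(1+α)) * ((j:ℝ)+1)^(α-1) := by
    intro i j hij
    have hx : (0:ℝ) < (i:ℝ)+1 := by positivity
    have hy : (0:ℝ) < (j:ℝ)+1 := by positivity
    have : (j:ℝ) ≤ i := by exact_mod_cast hij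
    unfold hilbK
    rw [max_eq_left (by linarith), Real.mul_rpow hx.le hy.le]
    have e1 : ((i:ℝ)+1)^(-(1+α)) = ((i:ℝ)+1)^(-(1/2):ℝ) * ((i:ℝ)+1)^(α-1/2) / ((i:ℝ)+1)^(2*α) := by
      rw [← Real.rpow_add hx, ← Real.rpow_sub hx]; ring_nf
    have e2 : ((j:ℝ)+1)^(α-1) = ((j:ℝ)+1)^(-(1/2):ℝ) * ((j:ℝ)+1)^(α-1/2) := by
      rw [← Real.rpow_add hy]; ring_nf
    rw [e1, e2]; ring
  induction N with
  | zero => simp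
  | succ N ih =>
    have hx : (0:ℝ) < (N:ℝ)+1 := by positivity
    rw [sum_range_succ, sum_range_succ _ N]
    simp only [sum_range_succ _ N]
    rw [sum_add_distrib]
    have hr : ∑ j ∈ range N, ((j:ℝ)+1)^(-(1/2):ℝ) * ((N:ℝ)+1)^(-(1/2):ℝ) * hilbK α j N
        = ((N:ℝ)+1)^(-(1+α)) * ∑ j ∈ range N, ((j:ℝ)+1)^(α-1) := by
      rw [mul_sum]
      refine sum_congr rfl fun j hj => ?_
      rw [hsymm, hval N j (mem_range.1 hj).le]
    have hr2 : ∑ j ∈ range N, ((N:ℝ)+1)^(-(1/2):ℝ) * ((j:ℝ)+1)^(-(1/2):ℝ) * hilbK α N j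
        = ((N:ℝ)+1)^(-(1+α)) * ∑ j ∈ range N, ((j:ℝ)+1)^(α-1) := by
      rw [← hr]
      exact sum_congr rfl fun j _ => hsymm _ _
    rw [hr, hr2, hval N N le_rfl]
    have hS := hilb_S_lower α hα (N+1)
    rw [sum_range_succ] at hS
    push_cast at hS
    have := mul_le_mul_of_nonneg_left hS (show 0 ≤ 2 * ((N:ℝ)+1)^(-(1+α)) by positivity)
    have e1 : ((N:ℝ)+1)^(-(1+α)) * ((N:ℝ)+1)^α = 1/((N:ℝ)+1) := by
      rw [← Real.rpow_add hx, one_div, ← Real.rpow_neg_one]; ring_nf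
    have e2 : ((N:ℝ)+1)^(-(1+α)) * ((N:ℝ)+1)^(α-1) = ((N:ℝ)+1)^(-(1+1):ℝ) := by
      rw [← Real.rpow_add hx]; ring_nf
    have e3 : 2 * ((N:ℝ)+1)^(-(1+α)) * ((((N:ℝ)+1)^α - 1)/α) =
      2/α * (1/((N:ℝ)+1)) - 2/α * ((N:ℝ)+1)^(-(1+α)) := by rw [← e1]; ring
    rw [e3, mul_add, mul_assoc 2, mul_assoc 2, e2] at this
    rw [e2]
    generalize ((N:ℝ)+1)^(-(1+1):ℝ) = Z at *
    generalize ((N:ℝ)+1)^(-(1+α)) * ∑ j ∈ range N, ((j:ℝ)+1)^(α-1) = Y at *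
    generalize 2/α * (1/((N:ℝ)+1)) - 2/α * ((N:ℝ)+1)^(-(1+α)) = V at *
    refine (add_le_add_left ih _).trans ?_
    linarith

lemma hilb_lower (α : ℝ) (hα : 0 < α) (C : ℝ) (hC : C < 2/α) :
    ∃ a : ℕ → ℝ, (∀ n, 0 ≤ a n) ∧ (Summable fun n => a n ^ 2) ∧ a 0 ≠ 0 ∧
      C * (Real.sqrt (∑' n, a n ^ 2) * Real.sqrt (∑' n, a n ^ 2)) <
        ∑' (i : ℕ) (j : ℕ), a i * a j * hilbK α i j := by
  have ht := Real.tendsto_sum_range_one_div_nat_succ_atTop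
  obtain ⟨N, hN, hN1⟩ := ((ht.eventually_gt_atTop
    ((2/α * hilbT α 0 + hilbT 1 0) / (2/α - C))).and (Filter.eventually_ge_atTop 1)).exists
  rw [div_lt_iff₀ (by linarith)] at hN
  let a : ℕ → ℝ := fun i => if i < N then ((i:ℝ)+1)^(-(1/2):ℝ) else 0
  have ha1 : ∀ i ∈ range N, a i = ((i:ℝ)+1)^(-(1/2):ℝ) := fun i hi => if_pos (mem_range.1 hi)
  have ha2 : ∀ i ∉ range N, a i = 0 := fun i hi => if_neg (fun h => hi (mem_range.2 h))
  have hsq : ∑' n, a n ^ 2 = ∑ i ∈ range N, 1/((i:ℝ)+1) := by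
    rw [tsum_eq_sum (s := range N) (fun i hi => by rw [ha2 i hi]; simp)]
    refine sum_congr rfl fun i hi => ?_
    have hx : (0:ℝ) < (i:ℝ)+1 := by positivity
    rw [ha1 i hi, sq, ← Real.rpow_add hx, 
      show (-(1/2):ℝ) + -(1/2) = -1 by norm_num, Real.rpow_neg_one, one_div]
  have hdbl : ∑' (i : ℕ) (j : ℕ), a i * a j * hilbK α i j =
      ∑ i ∈ range N, ∑ j ∈ range N,
        ((i:ℝ)+1)^(-(1/2):ℝ) * ((j:ℝ)+1)^(-(1/2):ℝ) * hilbK α i j := by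
    rw [tsum_eq_sum (s := range N) (fun i hi => by rw [ha2 i hi]; simp)]
    refine sum_congr rfl fun i hi => ?_
    rw [tsum_eq_sum (s := range N) (fun i hi => by rw [ha2 i hi]; simp)]
    exact sum_congr rfl fun j hj => by rw [ha1 i hi, ha1 j hj]
  refine ⟨a, fun n => ?_, ?_, ?_, ?_⟩
  · simp only [a]; split_ifs <;> positivity
  · exact summable_of_ne_finset_zero (s := range N) (fun i hi => by rw [ha2 i hi]; simp)
  · rw [ha1 0 (mem_range.2 hN1)]; simp
  · rw [Real.mul_self_sqrt (tsum_nonneg fun n => sq_nonneg _), hsq, hdbl]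
    refine lt_of_lt_of_le ?_ (hilb_E_lower α hα N)
    rw [sum_sub_distrib, sum_sub_distrib, ← mul_sum, ← mul_sum]
    have hsum : ∀ β : ℝ, 0 < β → ∑ i ∈ range N, ((i:ℝ)+1)^(-(1+β)) ≤ hilbT β 0 := fun β hβ => by
      have := (hilb_summable β hβ 0).sum_le_tsum (range N) (fun i _ => by positivity)
      simpa [hilbT] using this
    have s1 := mul_le_mul_of_nonneg_left (hsum α hα) (show 0 ≤ 2/α by positivity)
    have s2 := hsum 1 one_pos
    generalize ∑ i ∈ range N, ((i:ℝ)+1)^(-(1+1):ℝ) = Z at *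
    generalize 2/α * ∑ i ∈ range N, ((i:ℝ)+1)^(-(1+α)) = Y at *
    generalize ∑ i ∈ range N, 1/((i:ℝ)+1) = H at *
    have : H * (2/α - C) = 2/α * H - C * H := by ring
    linarith

lemma hilb_bridge (f : ℕ+ → ℝ) : ∑' n : ℕ+, f n = ∑' i : ℕ, f i.succPNat :=
  (Equiv.pnatEquivNat.symm.tsum_eq f).symm

/-- If `α > 0` and `α·ζ(1+α) ≤ 2` (i.e. `0 < α ≤ α₀ = 1.48…`), then `2/α` is the best
constant in the Hilbert-type inequality for the bilinear form `B_α`: the double sum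
`∑_{m,n} a_m b_n (mn)^{α-1/2} / max(m,n)^{2α}` is at most `(2/α) ‖a‖_{ℓ²} ‖b‖_{ℓ²}` for all
nonnegative square-summable `a, b`, and for every `C < 2/α` some nonzero nonnegative
square-summable pair exceeds `C ‖a‖_{ℓ²} ‖b‖_{ℓ²}`. Here `ζ(1+α) = ∑_{n≥1} n^{-(1+α)}`. -/
theorem bilinear_form_sharp_constant (α : ℝ) (hα : 0 < α)
    (hα0 : α * (∑' n : ℕ+, (n : ℝ) ^ (-(1+α))) ≤ 2) :
    (∀ a b : ℕ+ → ℝ, (∀ n, 0 ≤ a n) → (∀ n, 0 ≤ b n) →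
      (Summable fun n => a n ^ 2) → (Summable fun n => b n ^ 2) →
      ∑' (m : ℕ+) (n : ℕ+),
          a m * b n * ((m : ℝ) * (n : ℝ)) ^ (α - 1/2) / (max (m : ℝ) (n : ℝ)) ^ (2*α)
        ≤ (2/α) * (Real.sqrt (∑' n : ℕ+, a n ^ 2) * Real.sqrt (∑' n : ℕ+, b n ^ 2))) ∧
    (∀ C : ℝ, C < 2/α →
      ∃ a b : ℕ+ → ℝ, (∀ n, 0 ≤ a n) ∧ (∀ n, 0 ≤ b n) ∧
        (Summable fun n => a n ^ 2) ∧ (Summable fun n => b n ^ 2) ∧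
        a ≠ 0 ∧ b ≠ 0 ∧
        C * (Real.sqrt (∑' n : ℕ+, a n ^ 2) * Real.sqrt (∑' n : ℕ+, b n ^ 2))
          < ∑' (m : ℕ+) (n : ℕ+),
              a m * b n * ((m : ℝ) * (n : ℝ)) ^ (α - 1/2) / (max (m : ℝ) (n : ℝ)) ^ (2*α)) := by
  have hz : α * hilbT α 0 ≤ 2 := by
    rw [hilb_bridge] at hα0
    simpa [hilbT] using hα0
  constructor
  · intro a b ha0 hb0 ha hb
    have h := hilb_upper α hα hz (fun i => a i.succPNat) (fun i => b i.succPNat)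
      (fun _ => ha0 _) (fun _ => hb0 _)
      ((Equiv.pnatEquivNat.symm.summable_iff (f := fun n : ℕ+ => a n ^ 2)).2 ha)
      ((Equiv.pnatEquivNat.symm.summable_iff (f := fun n : ℕ+ => b n ^ 2)).2 hb)
    simp only [hilb_bridge]
    simpa [hilbK, mul_div_assoc] using h
  · intro C hC
    obtain ⟨a, ha0, ha, hne, hlt⟩ := hilb_lower α hα C hC
    have hs : Summable fun n : ℕ+ => a n.natPred ^ 2 :=
      (Equiv.pnatEquivNat.summable_iff (f := fun n : ℕ => a n ^ 2)).2 ha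
    have hne' : (fun n : ℕ+ => a n.natPred) ≠ 0 := fun h => hne (congrFun h 1)
    refine ⟨fun n => a n.natPred, fun n => a n.natPred, fun _ => ha0 _, fun _ => ha0 _,
      hs, hs, hne', hne', ?_⟩
    simp only [hilb_bridge]
    simpa [hilbK, mul_div_assoc] using hlt
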